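/- Let ℳ be a finite ε̲-packing net of a hypothesis class H ⊆ L²(μ) and 𝒩 a finite ε-covering net of H, both with respect to the L²(μ) norm. Suppose samples are generated as y = f_θ(x) + ε with ε ∼ N(0, 1/2) independent Gaussian noise, so KL(P_θ^{⊗N} ‖ P_{θ'}^{⊗N}) = N‖f_θ − f_{θ'}‖²_{L²(μ)}. Then for uniformly random f_θ ∈ ℳ, the mutual information between θ and the sample S of size N satisfies I(θ; S) ≤ log|𝒩| + N ε². -/

import Mathlib

open MeasureTheory

/-!
The mutual information `I(θ; S)` is the average over `θ` of the relative entropy from the law of the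
sample to the mixture over `ℳ`. Replacing that mixture by any fixed law can only increase the
average: the increase is the relative entropy from the mixture to the new law, which is nonnegative.
Take the uniform mixture over the covering `𝒩`. It dominates `1 / |𝒩|` times the law of each
`f' ∈ 𝒩`, so the relative entropy from the law of `f` to it is at most `log |𝒩|` plus the relative
entropy from the law of `f` to that of a nearby `f'`. The latter is additive over the `N`
observations, and for Gaussian noise of variance `v` each observation contributes
`‖f - f'‖² / (2v)` in `L²(μ)`, because the log-likelihood ratio is affine in the noise.
-/

section RelEntropy

variable {Ω : Type*} [MeasurableSpace Ω] {κ : Measure Ω} {p q r : Ω → ℝ} {c : ℝ}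

/-- `p` is a probability density with respect to `κ`. Integrability need not be a field, since a
nonintegrable function has Bochner integral `0`. -/
structure IsProbDensity (κ : Measure Ω) (p : Ω → ℝ) : Prop where
  nonneg : ∀ ω, 0 ≤ p ω
  integral_eq_one : ∫ ω, p ω ∂κ = 1

/-- The relative entropy `KL(p‖q)` of two densities with respect to the reference measure `κ`. It
is meaningful under `FiniteRelEntropy κ p q`, and takes junk values otherwise. -/
noncomputable def relEntropy (κ : Measure Ω) (p q : Ω → ℝ) : ℝ :=
  ∫ ω, p ω * Real.log (p ω / q ω) ∂κ

/-- The density `p` has finite relative entropy with respect to `q`: `p` vanishes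
wherever `q` does, and `p log (p / q)` is integrable. -/
structure FiniteRelEntropy (κ : Measure Ω) (p q : Ω → ℝ) : Prop where
  ne_zero : ∀ ω, p ω ≠ 0 → q ω ≠ 0
  integrable : Integrable (fun ω => p ω * Real.log (p ω / q ω)) κ

theorem IsProbDensity.integrable (hp : IsProbDensity κ p) : Integrable p κ :=
  not_imp_comm.1 integral_undef (hp.integral_eq_one ▸ one_ne_zero)

protected theorem FiniteRelEntropy.refl (κ : Measure Ω) (p : Ω → ℝ) : FiniteRelEntropy κ p p where
  ne_zero _ := id
  integrable := by
    have hzero : ∀ ω, p ω * Real.log (p ω / p ω) = 0 := fun ω => by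
      rcases eq_or_ne (p ω) 0 with h | h <;> simp [h]
    simp only [hzero]
    exact integrable_zero ..

theorem sub_le_mul_log_div {a b : ℝ} (ha : 0 ≤ a) (hb : 0 ≤ b) (hab : a ≠ 0 → b ≠ 0) :
    a - b ≤ a * Real.log (a / b) := by
  rcases ha.eq_or_lt with rfl | ha
  · simpa using hb
  have hb : 0 < b := hb.lt_of_ne' (hab ha.ne')
  calc a - b = a * (1 - (a / b)⁻¹) := by field_simp
    _ ≤ a * Real.log (a / b) := by gcongr; exact Real.one_sub_inv_le_log_of_pos (by positivity)

theorem mul_log_div_add_mul_log_div {a b d : ℝ} (hb : a ≠ 0 → b ≠ 0) (hd : a ≠ 0 → d ≠ 0) :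
    a * Real.log (a / b) + a * Real.log (b / d) = a * Real.log (a / d) := by
  rcases eq_or_ne a 0 with rfl | ha
  · simp
  rw [Real.log_div ha (hb ha), Real.log_div (hb ha) (hd ha), Real.log_div ha (hd ha)]
  ring

theorem mul_log_div_le_of_le_mul {a b c d : ℝ} (ha : 0 ≤ a) (hb : 0 ≤ b) (hd : 0 ≤ d)
    (had : a ≠ 0 → d ≠ 0) (hle : d ≤ c * b) :
    a * Real.log (a / b) ≤ a * Real.log c + a * Real.log (a / d) := by
  rcases ha.eq_or_lt with rfl | ha
  · simp
  have hd : 0 < d := hd.lt_of_ne' (had ha.ne')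
  have hb : 0 < b := hb.lt_of_ne' (right_ne_zero_of_mul (hd.trans_le hle).ne')
  have hc : c ≠ 0 := left_ne_zero_of_mul (hd.trans_le hle).ne'
  rw [← mul_add, Real.log_div ha.ne' hb.ne', Real.log_div ha.ne' hd.ne']
  have hlog : Real.log d ≤ Real.log c + Real.log b := by
    rw [← Real.log_mul hc hb.ne']
    exact Real.log_le_log hd hle
  gcongr
  linarith

theorem relEntropy_nonneg (hp : IsProbDensity κ p) (hq : IsProbDensity κ q)
    (hpq : FiniteRelEntropy κ p q) : 0 ≤ relEntropy κ p q :=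
  calc 0 = ∫ ω, (p ω - q ω) ∂κ := by
        rw [integral_sub hp.integrable hq.integrable, hp.integral_eq_one, hq.integral_eq_one,
          sub_self]
    _ ≤ relEntropy κ p q :=
        integral_mono (hp.integrable.sub hq.integrable) hpq.integrable fun ω =>
          sub_le_mul_log_div (hp.nonneg ω) (hq.nonneg ω) (hpq.ne_zero ω)

theorem FiniteRelEntropy.of_le_mul (hp : IsProbDensity κ p) (hq : IsProbDensity κ q)
    (hpr : FiniteRelEntropy κ p r) (hr : ∀ ω, 0 ≤ r ω) (hle : ∀ ω, r ω ≤ c * q ω) :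
    FiniteRelEntropy κ p q := by
  have hne : ∀ ω, p ω ≠ 0 → q ω ≠ 0 := fun ω hω hqω =>
    hpr.ne_zero ω hω <| (hr ω).antisymm' <| by simpa [hqω] using hle ω
  refine ⟨hne, integrable_of_le_of_le ?_ (.of_forall fun ω => ?_) (.of_forall fun ω => ?_)
    (hp.integrable.sub hq.integrable)
    ((hp.integrable.mul_const (Real.log c)).add hpr.integrable)⟩
  · have hpm := hp.integrable.aemeasurable
    have hqm := hq.integrable.aemeasurable
    exact (hpm.mul (hpm.div hqm).log).aestronglyMeasurable
  · exact sub_le_mul_log_div (hp.nonneg ω) (hq.nonneg ω) (hne ω)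
  · exact mul_log_div_le_of_le_mul (hp.nonneg ω) (hq.nonneg ω) (hr ω)
      (hpr.ne_zero ω) (hle ω)

theorem relEntropy_le_log_add (hp : IsProbDensity κ p) (hq : IsProbDensity κ q)
    (hpr : FiniteRelEntropy κ p r) (hr : ∀ ω, 0 ≤ r ω) (hle : ∀ ω, r ω ≤ c * q ω) :
    relEntropy κ p q ≤ Real.log c + relEntropy κ p r := by
  have hlog := hp.integrable.mul_const (Real.log c)
  calc relEntropy κ p q
      ≤ ∫ ω, (p ω * Real.log c + p ω * Real.log (p ω / r ω)) ∂κ :=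
        integral_mono (hpr.of_le_mul hp hq hr hle).integrable (hlog.add hpr.integrable) fun ω =>
          mul_log_div_le_of_le_mul (hp.nonneg ω) (hq.nonneg ω) (hr ω)
            (hpr.ne_zero ω) (hle ω)
    _ = Real.log c + relEntropy κ p r := by
        rw [integral_add hlog hpr.integrable, integral_mul_const, hp.integral_eq_one, one_mul,
          relEntropy]

end RelEntropy

section MutualInfo

variable {Ω ι : Type*} {s : Finset ι} {p : ι → Ω → ℝ} {q : Ω → ℝ}

/-- The uniform mixture of the densities `p i`, `i ∈ s`. -/
noncomputable def uniformMixture (s : Finset ι) (p : ι → Ω → ℝ) (ω : Ω) : ℝ :=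
  (1 / (s.card : ℝ)) * ∑ i ∈ s, p i ω

theorem le_card_mul_uniformMixture {ω : Ω} {i : ι} (hp : ∀ j ∈ s, 0 ≤ p j ω) (hi : i ∈ s) :
    p i ω ≤ s.card * uniformMixture s p ω := by
  have hcard : (s.card : ℝ) ≠ 0 := Nat.cast_ne_zero.2 (Finset.card_ne_zero_of_mem hi)
  rw [uniformMixture, ← mul_assoc, mul_one_div_cancel hcard, one_mul]
  exact Finset.single_le_sum hp hi

theorem uniformMixture_mul_log_div {ω : Ω} (hp : ∀ i ∈ s, 0 ≤ p i ω)
    (hpq : ∀ i ∈ s, p i ω ≠ 0 → q ω ≠ 0) :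
    uniformMixture s p ω * Real.log (uniformMixture s p ω / q ω) =
      (1 / (s.card : ℝ)) * ∑ i ∈ s, (p i ω * Real.log (p i ω / q ω)
        - p i ω * Real.log (p i ω / uniformMixture s p ω)) := by
  have hmix : ∀ i ∈ s, p i ω ≠ 0 → uniformMixture s p ω ≠ 0 := fun i hi hne hzero =>
    hne <| (hp i hi).antisymm' <| by
      simpa only [hzero, mul_zero] using le_card_mul_uniformMixture hp hi
  rw [uniformMixture, mul_assoc, Finset.sum_mul, ← uniformMixture]
  exact congrArg _ <| Finset.sum_congr rfl fun i hi =>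
    eq_sub_of_add_eq' <| mul_log_div_add_mul_log_div (hmix i hi) (hpq i hi)

variable [MeasurableSpace Ω] {κ : Measure Ω}

/-- The mutual information `I(θ; S)` between a parameter `θ` uniform on `s` and a sample `S` of
density `p θ`: the average relative entropy from the `p i` to their uniform mixture. -/
noncomputable def uniformMutualInfo (κ : Measure Ω) (s : Finset ι) (p : ι → Ω → ℝ) : ℝ :=
  (1 / (s.card : ℝ)) * ∑ i ∈ s, relEntropy κ (p i) (uniformMixture s p)

protected theorem IsProbDensity.uniformMixture (hs : s.Nonempty)
    (hp : ∀ i ∈ s, IsProbDensity κ (p i)) : IsProbDensity κ (uniformMixture s p) where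
  nonneg ω := mul_nonneg (by positivity) (Finset.sum_nonneg fun i hi => (hp i hi).nonneg ω)
  integral_eq_one := by
    have hcard : (s.card : ℝ) ≠ 0 := Nat.cast_ne_zero.2 hs.card_ne_zero
    simp only [uniformMixture]
    rw [integral_const_mul, integral_finsetSum s fun i hi => (hp i hi).integrable,
      Finset.sum_congr rfl fun i hi => (hp i hi).integral_eq_one]
    simp [hcard]

theorem FiniteRelEntropy.uniformMixture_right {i : ι} (hi : i ∈ s)
    (hp : ∀ j ∈ s, IsProbDensity κ (p j)) (hq : IsProbDensity κ q)
    (hqi : FiniteRelEntropy κ q (p i)) : FiniteRelEntropy κ q (uniformMixture s p) :=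
  hqi.of_le_mul hq (.uniformMixture ⟨i, hi⟩ hp) (hp i hi).nonneg fun ω =>
    le_card_mul_uniformMixture (fun j hj => (hp j hj).nonneg ω) hi

theorem relEntropy_uniformMixture_right_le {i : ι} (hi : i ∈ s)
    (hp : ∀ j ∈ s, IsProbDensity κ (p j)) (hq : IsProbDensity κ q)
    (hqi : FiniteRelEntropy κ q (p i)) :
    relEntropy κ q (uniformMixture s p) ≤ Real.log s.card + relEntropy κ q (p i) :=
  relEntropy_le_log_add hq (.uniformMixture ⟨i, hi⟩ hp) hqi (hp i hi).nonneg fun ω =>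
    le_card_mul_uniformMixture (fun j hj => (hp j hj).nonneg ω) hi

theorem FiniteRelEntropy.uniformMixture_left (hp : ∀ i ∈ s, IsProbDensity κ (p i))
    (hpq : ∀ i ∈ s, FiniteRelEntropy κ (p i) q) : FiniteRelEntropy κ (uniformMixture s p) q where
  ne_zero ω hω := by
    obtain ⟨i, hi, hne⟩ := Finset.exists_ne_zero_of_sum_ne_zero (right_ne_zero_of_mul hω)
    exact (hpq i hi).ne_zero ω hne
  integrable := by
    have hmix : ∀ i ∈ s, FiniteRelEntropy κ (p i) (uniformMixture s p) := fun i hi =>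
      (FiniteRelEntropy.refl κ (p i)).uniformMixture_right hi hp (hp i hi)
    simp_rw [uniformMixture_mul_log_div (fun i hi => (hp i hi).nonneg _)
      fun i hi => (hpq i hi).ne_zero _]
    exact (integrable_finsetSum s fun i hi =>
      (hpq i hi).integrable.sub (hmix i hi).integrable).const_mul _

theorem relEntropy_uniformMixture_left (hp : ∀ i ∈ s, IsProbDensity κ (p i))
    (hpq : ∀ i ∈ s, FiniteRelEntropy κ (p i) q) :
    relEntropy κ (uniformMixture s p) q =
      (1 / (s.card : ℝ)) * ∑ i ∈ s, relEntropy κ (p i) q - uniformMutualInfo κ s p := by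
  have hmix : ∀ i ∈ s, FiniteRelEntropy κ (p i) (uniformMixture s p) := fun i hi =>
    (FiniteRelEntropy.refl κ (p i)).uniformMixture_right hi hp (hp i hi)
  calc relEntropy κ (uniformMixture s p) q
      = ∫ ω, (1 / (s.card : ℝ)) * ∑ i ∈ s, (p i ω * Real.log (p i ω / q ω)
          - p i ω * Real.log (p i ω / uniformMixture s p ω)) ∂κ :=
        integral_congr_ae (.of_forall fun ω => uniformMixture_mul_log_div
          (fun i hi => (hp i hi).nonneg ω) fun i hi => (hpq i hi).ne_zero ω)
    _ = (1 / (s.card : ℝ)) * ∑ i ∈ s,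
          (relEntropy κ (p i) q - relEntropy κ (p i) (uniformMixture s p)) := by
        rw [integral_const_mul]
        refine congrArg _ ((integral_finsetSum s fun i hi =>
          (hpq i hi).integrable.sub (hmix i hi).integrable).trans ?_)
        exact (Finset.sum_congr rfl fun i hi =>
          integral_sub (hpq i hi).integrable (hmix i hi).integrable)
    _ = (1 / (s.card : ℝ)) * ∑ i ∈ s, relEntropy κ (p i) q - uniformMutualInfo κ s p := by
        rw [Finset.sum_sub_distrib, mul_sub, uniformMutualInfo]

theorem uniformMutualInfo_le_average_relEntropy (hs : s.Nonempty)
    (hp : ∀ i ∈ s, IsProbDensity κ (p i)) (hq : IsProbDensity κ q)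
    (hpq : ∀ i ∈ s, FiniteRelEntropy κ (p i) q) :
    uniformMutualInfo κ s p ≤ (1 / (s.card : ℝ)) * ∑ i ∈ s, relEntropy κ (p i) q := by
  have hnonneg := relEntropy_nonneg (.uniformMixture hs hp) hq (.uniformMixture_left hp hpq)
  rwa [relEntropy_uniformMixture_left hp hpq, sub_nonneg] at hnonneg

theorem uniformMutualInfo_le_log_card_add {ι' : Type*} {t : Finset ι'} {p' : ι' → Ω → ℝ} {D : ℝ}
    (hs : s.Nonempty) (hp : ∀ i ∈ s, IsProbDensity κ (p i))
    (hp' : ∀ j ∈ t, IsProbDensity κ (p' j))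
    (hcover : ∀ i ∈ s, ∃ j ∈ t, FiniteRelEntropy κ (p i) (p' j) ∧ relEntropy κ (p i) (p' j) ≤ D) :
    uniformMutualInfo κ s p ≤ Real.log t.card + D := by
  have ht : t.Nonempty := let ⟨i, hi⟩ := hs; let ⟨j, hj, _⟩ := hcover i hi; ⟨j, hj⟩
  have hle : ∀ i ∈ s, relEntropy κ (p i) (uniformMixture t p') ≤ Real.log t.card + D := by
    intro i hi
    obtain ⟨j, hj, hfin, hD⟩ := hcover i hi
    exact (relEntropy_uniformMixture_right_le hj hp' (hp i hi) hfin).trans (by gcongr)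
  have hfin : ∀ i ∈ s, FiniteRelEntropy κ (p i) (uniformMixture t p') := fun i hi =>
    let ⟨_, hj, hij, _⟩ := hcover i hi
    hij.uniformMixture_right hj hp' (hp i hi)
  calc uniformMutualInfo κ s p
      ≤ (1 / (s.card : ℝ)) * ∑ i ∈ s, relEntropy κ (p i) (uniformMixture t p') :=
        uniformMutualInfo_le_average_relEntropy hs hp (.uniformMixture ht hp') hfin
    _ ≤ (1 / (s.card : ℝ)) * ∑ _i ∈ s, (Real.log t.card + D) := by gcongr with i hi; exact hle i hi
    _ = Real.log t.card + D := by
        have hcard : (s.card : ℝ) ≠ 0 := Nat.cast_ne_zero.2 hs.card_ne_zero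
        rw [Finset.sum_const, nsmul_eq_mul, ← mul_assoc, one_div_mul_cancel hcard, one_mul]

end MutualInfo

section Pi

variable {ι : Type*} [Fintype ι] {E : ι → Type*}

theorem prod_mul_log_prod_div (a b : ι → ℝ) (hab : ∀ i, a i ≠ 0 → b i ≠ 0) :
    (∏ i, a i) * Real.log ((∏ i, a i) / ∏ i, b i) =
      ∑ i, (∏ j, a j) * Real.log (a i / b i) := by
  by_cases ha : ∀ i, a i ≠ 0
  · rw [← Finset.prod_div_distrib, ← Finset.mul_sum,
      Real.log_prod fun i _ => div_ne_zero (ha i) (hab i (ha i))]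
  · push Not at ha
    obtain ⟨i, hi⟩ := ha
    simp [Finset.prod_eq_zero (Finset.mem_univ i) hi]

theorem prod_mul_apply_eq_prod_update [DecidableEq ι] (p : ∀ i, E i → ℝ) (i : ι) (l : E i → ℝ)
    (x : ∀ i, E i) :
    (∏ j, p j (x j)) * l (x i) =
      ∏ j, Function.update p i (fun y => p i y * l y) j (x j) := by
  rw [← Finset.mul_prod_erase _ _ (Finset.mem_univ i),
    ← Finset.mul_prod_erase _ (fun j => Function.update p i _ j (x j)) (Finset.mem_univ i),
    Function.update_self, mul_right_comm]
  refine congrArg _ (Finset.prod_congr rfl fun j hj => ?_)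
  rw [Function.update_of_ne (Finset.ne_of_mem_erase hj)]

variable [∀ i, MeasurableSpace (E i)] {κ : ∀ i, Measure (E i)} [∀ i, SigmaFinite (κ i)]
  {p q : ∀ i, E i → ℝ}

protected theorem IsProbDensity.pi (hp : ∀ i, IsProbDensity (κ i) (p i)) :
    IsProbDensity (Measure.pi κ) fun x => ∏ i, p i (x i) where
  nonneg x := Finset.prod_nonneg fun i _ => (hp i).nonneg (x i)
  integral_eq_one := by
    rw [integral_fintype_prod_eq_prod]
    exact Finset.prod_eq_one fun i _ => (hp i).integral_eq_one

theorem IsProbDensity.integrable_pi_mul_apply (hp : ∀ i, IsProbDensity (κ i) (p i)) {i : ι}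
    {l : E i → ℝ} (hl : Integrable (fun y => p i y * l y) (κ i)) :
    Integrable (fun x : ∀ i, E i => (∏ j, p j (x j)) * l (x i)) (Measure.pi κ) := by
  classical
  simp_rw [prod_mul_apply_eq_prod_update p i l]
  refine Integrable.fintype_prod_dep fun j => ?_
  rcases eq_or_ne j i with rfl | hj
  · rwa [Function.update_self]
  · rw [Function.update_of_ne hj]
    exact (hp j).integrable

theorem IsProbDensity.integral_pi_mul_apply (hp : ∀ i, IsProbDensity (κ i) (p i)) (i : ι)
    (l : E i → ℝ) :
    ∫ x, (∏ j, p j (x j)) * l (x i) ∂Measure.pi κ = ∫ y, p i y * l y ∂κ i := by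
  classical
  simp_rw [prod_mul_apply_eq_prod_update p i l]
  rw [integral_fintype_prod_eq_prod, Fintype.prod_eq_single i fun j hj => ?_, Function.update_self]
  rw [Function.update_of_ne hj, (hp j).integral_eq_one]

protected theorem FiniteRelEntropy.pi (hp : ∀ i, IsProbDensity (κ i) (p i))
    (hpq : ∀ i, FiniteRelEntropy (κ i) (p i) (q i)) :
    FiniteRelEntropy (Measure.pi κ) (fun x => ∏ i, p i (x i)) fun x => ∏ i, q i (x i) where
  ne_zero x hx := Finset.prod_ne_zero_iff.2 fun i hi =>
    (hpq i).ne_zero _ (Finset.prod_ne_zero_iff.1 hx i hi)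
  integrable := by
    simp_rw [prod_mul_log_prod_div _ _ fun i => (hpq i).ne_zero _]
    exact integrable_finsetSum _ fun i _ =>
      IsProbDensity.integrable_pi_mul_apply hp (hpq i).integrable

theorem relEntropy_pi (hp : ∀ i, IsProbDensity (κ i) (p i))
    (hpq : ∀ i, FiniteRelEntropy (κ i) (p i) (q i)) :
    relEntropy (Measure.pi κ) (fun x => ∏ i, p i (x i)) (fun x => ∏ i, q i (x i)) =
      ∑ i, relEntropy (κ i) (p i) (q i) := by
  simp_rw [relEntropy, prod_mul_log_prod_div _ _ fun i => (hpq i).ne_zero _]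
  rw [integral_finsetSum _ fun i _ => IsProbDensity.integrable_pi_mul_apply hp (hpq i).integrable]
  exact Finset.sum_congr rfl fun i _ => IsProbDensity.integral_pi_mul_apply hp i
    fun y => Real.log (p i y / q i y)

end Pi

section IID

variable {Ω : Type*} {p q : Ω → ℝ}

/-- The density of `n` independent observations, each of density `p`. -/
noncomputable def iidDensity (n : ℕ) (p : Ω → ℝ) (x : Fin n → Ω) : ℝ := ∏ k, p (x k)

variable [MeasurableSpace Ω] {κ : Measure Ω} [SigmaFinite κ]

protected theorem IsProbDensity.iidDensity (hp : IsProbDensity κ p) (n : ℕ) :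
    IsProbDensity (Measure.pi fun _ : Fin n => κ) (iidDensity n p) :=
  .pi fun _ => hp

protected theorem FiniteRelEntropy.iidDensity (hp : IsProbDensity κ p)
    (hpq : FiniteRelEntropy κ p q) (n : ℕ) :
    FiniteRelEntropy (Measure.pi fun _ : Fin n => κ) (iidDensity n p) (iidDensity n q) :=
  .pi (fun _ => hp) fun _ => hpq

theorem relEntropy_iidDensity (hp : IsProbDensity κ p) (hpq : FiniteRelEntropy κ p q) (n : ℕ) :
    relEntropy (Measure.pi fun _ : Fin n => κ) (iidDensity n p) (iidDensity n q) =
      n * relEntropy κ p q := by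
  calc relEntropy (Measure.pi fun _ : Fin n => κ) (iidDensity n p) (iidDensity n q)
      = ∑ _k : Fin n, relEntropy κ p q := relEntropy_pi (fun _ => hp) fun _ => hpq
    _ = n * relEntropy κ p q := by simp

end IID

section GaussianRegression

open ProbabilityTheory
open scoped NNReal

variable {X : Type*} {v : ℝ≥0} {w f g : X → ℝ}

/-- The density of an observation `(x, y)`, where `x` has density `w` and `y = f x + ξ` with
`ξ ∼ N(0, v)`. -/
noncomputable def regressionDensity (w : X → ℝ) (v : ℝ≥0) (f : X → ℝ) (z : X × ℝ) : ℝ :=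
  gaussianPDFReal (f z.1) v z.2 * w z.1

theorem log_gaussianPDFReal_div (hv : v ≠ 0) (a b y : ℝ) :
    Real.log (gaussianPDFReal a v y / gaussianPDFReal b v y) =
      ((a - b) / v) * (y - a) + (a - b) ^ 2 / (2 * v) := by
  have hv' : (v : ℝ) ≠ 0 := NNReal.coe_ne_zero.2 hv
  have hnorm : (√(2 * Real.pi * v))⁻¹ ≠ 0 := by positivity
  simp only [gaussianPDFReal]
  rw [mul_div_mul_left _ _ hnorm, ← Real.exp_sub, Real.log_exp]
  field_simp
  ring

theorem integrable_gaussianPDFReal_mul_self (v : ℝ≥0) :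
    Integrable fun z => gaussianPDFReal 0 v z * z := by
  rcases eq_or_ne v 0 with rfl | hv
  · simp
  have hid := (memLp_id_gaussianReal (μ := 0) (v := v) 1).integrable le_rfl
  rw [gaussianReal_of_var_ne_zero _ hv,
    integrable_withDensity_iff_integrable_smul' (measurable_gaussianPDF _ _)
      (.of_forall fun _ => gaussianPDF_lt_top)] at hid
  simpa using hid

theorem integral_gaussianPDFReal_mul_self (v : ℝ≥0) :
    ∫ z, gaussianPDFReal 0 v z * z = 0 := by
  rcases eq_or_ne v 0 with rfl | hv
  · simp
  simpa [integral_gaussianReal_eq_integral_smul hv] using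
    integral_id_gaussianReal (μ := 0) (v := v)

/-- The first summand integrates to `0` in `z.2`. -/
theorem regressionDensity_mul_log_div (hv : v ≠ 0) (z : X × ℝ) :
    regressionDensity w v f z * Real.log (regressionDensity w v f z / regressionDensity w v g z) =
      (f z.1 - g z.1) * w z.1 / v * (gaussianPDFReal 0 v (z.2 - f z.1) * (z.2 - f z.1)) +
        (f z.1 - g z.1) ^ 2 * w z.1 / (2 * v) * gaussianPDFReal 0 v (z.2 - f z.1) := by
  rw [gaussianPDFReal_sub, zero_add]
  rcases eq_or_ne (w z.1) 0 with hwz | hwz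
  · simp [regressionDensity, hwz]
  rw [regressionDensity, regressionDensity, mul_div_mul_right _ _ hwz, log_gaussianPDFReal_div hv]
  ring

theorem regressionDensity_half (w f : X → ℝ) (z : X × ℝ) :
    regressionDensity w (1 / 2) f z =
      (1 / √Real.pi) * Real.exp (-(z.2 - f z.1) ^ 2) * w z.1 := by
  have hvar : 2 * Real.pi * ((1 / 2 : ℝ≥0) : ℝ) = Real.pi := by push_cast; ring
  have htwo : 2 * ((1 / 2 : ℝ≥0) : ℝ) = 1 := by push_cast; ring
  rw [regressionDensity, gaussianPDFReal, hvar, htwo, div_one, one_div]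

variable [MeasurableSpace X] {ν : Measure X}

theorem integrable_mul_of_integrable_sq_mul {d : X → ℝ} (hd : Measurable d)
    (hw0 : ∀ x, 0 ≤ w x) (hw : Integrable w ν) (hd2 : Integrable (fun x => d x ^ 2 * w x) ν) :
    Integrable (fun x => d x * w x) ν := by
  refine (hw.add hd2).mono' (hd.aestronglyMeasurable.mul
    hw.aestronglyMeasurable) (.of_forall fun x => ?_)
  have habs : |d x| ≤ 1 + d x ^ 2 := by
    rw [← sq_abs]
    nlinarith [sq_nonneg (|d x| - 1)]
  calc ‖d x * w x‖ = |d x| * w x := by rw [Real.norm_eq_abs, abs_mul, abs_of_nonneg (hw0 x)]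
    _ ≤ (1 + d x ^ 2) * w x := by gcongr; exact hw0 x
    _ = w x + d x ^ 2 * w x := by ring

theorem integrable_sub_sq_mul_of_abs_le {A B : ℝ} (hw : Integrable w ν) (hf : Measurable f)
    (hg : Measurable g) (hfA : ∀ x, |f x| ≤ A) (hgB : ∀ x, |g x| ≤ B) :
    Integrable (fun x => (f x - g x) ^ 2 * w x) ν := by
  refine hw.bdd_mul (c := (A + B) ^ 2) ((hf.sub hg).pow_const 2).aestronglyMeasurable
    (.of_forall fun x => ?_)
  rw [norm_pow, Real.norm_eq_abs]
  gcongr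
  exact (abs_sub _ _).trans (add_le_add (hfA x) (hgB x))

variable [SigmaFinite ν]

theorem measurePreserving_prod_sub (hf : Measurable f) :
    MeasurePreserving (fun z : X × ℝ => (z.1, z.2 - f z.1)) (ν.prod volume) (ν.prod volume) :=
  (MeasurePreserving.id ν).skew_product (g := fun x y => y - f x) (by fun_prop)
    (.of_forall fun x => (measurePreserving_sub_right volume (f x)).map_eq)

theorem integrable_mul_comp_sub {a : X → ℝ} {h : ℝ → ℝ} (hf : Measurable f) (ha : Integrable a ν)
    (hh : Integrable h) :
    Integrable (fun z : X × ℝ => a z.1 * h (z.2 - f z.1)) (ν.prod volume) :=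
  (measurePreserving_prod_sub hf).integrable_comp_of_integrable (ha.mul_prod hh)

theorem integral_mul_comp_sub {a : X → ℝ} {h : ℝ → ℝ} (hf : Measurable f) (ha : Integrable a ν)
    (hh : Integrable h) :
    ∫ z : X × ℝ, a z.1 * h (z.2 - f z.1) ∂ν.prod volume = (∫ x, a x ∂ν) * ∫ y, h y := by
  have hpres := measurePreserving_prod_sub (ν := ν) hf
  have hah := ha.mul_prod hh
  rw [← hpres.map_eq] at hah
  rw [← integral_prod_mul, ← integral_map hpres.measurable.aemeasurable hah.aestronglyMeasurable,
    hpres.map_eq]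

protected theorem IsProbDensity.regressionDensity (hv : v ≠ 0) (hw : IsProbDensity ν w)
    (hf : Measurable f) : IsProbDensity (ν.prod volume) (regressionDensity w v f) where
  nonneg z := mul_nonneg (gaussianPDFReal_nonneg ..) (hw.nonneg z.1)
  integral_eq_one := by
    have hshift := integral_mul_comp_sub hf hw.integrable (integrable_gaussianPDFReal 0 v)
    simp only [gaussianPDFReal_sub, zero_add, mul_comm (w _)] at hshift
    rw [hw.integral_eq_one, integral_gaussianPDFReal_eq_one 0 hv, one_mul] at hshift
    exact hshift

protected theorem FiniteRelEntropy.regressionDensity (hv : v ≠ 0) (hw : IsProbDensity ν w)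
    (hf : Measurable f) (hg : Measurable g)
    (hfg : Integrable (fun x => (f x - g x) ^ 2 * w x) ν) :
    FiniteRelEntropy (ν.prod volume) (regressionDensity w v f) (regressionDensity w v g) where
  ne_zero z hz := mul_ne_zero (gaussianPDFReal_pos _ _ _ hv).ne' (right_ne_zero_of_mul hz)
  integrable := by
    have hfg1 := integrable_mul_of_integrable_sq_mul (hf.sub hg) hw.nonneg hw.integrable hfg
    simp_rw [regressionDensity_mul_log_div hv]
    have hφ := integrable_gaussianPDFReal 0 v
    have hφ1 := integrable_gaussianPDFReal_mul_self v
    exact (integrable_mul_comp_sub hf (hfg1.div_const _) hφ1).add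
      (integrable_mul_comp_sub hf (hfg.div_const _) hφ)

theorem relEntropy_regressionDensity (hv : v ≠ 0) (hw : IsProbDensity ν w)
    (hf : Measurable f) (hg : Measurable g)
    (hfg : Integrable (fun x => (f x - g x) ^ 2 * w x) ν) :
    relEntropy (ν.prod volume) (regressionDensity w v f) (regressionDensity w v g) =
      (∫ x, (f x - g x) ^ 2 * w x ∂ν) / (2 * v) := by
  have hlin : Integrable (fun x => (f x - g x) * w x / v) ν :=
    (integrable_mul_of_integrable_sq_mul (hf.sub hg) hw.nonneg hw.integrable hfg).div_const _
  have hquad := hfg.div_const (2 * v : ℝ)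
  have hφ := integrable_gaussianPDFReal 0 v
  have hφ1 := integrable_gaussianPDFReal_mul_self v
  simp_rw [relEntropy, regressionDensity_mul_log_div hv]
  rw [integral_add (integrable_mul_comp_sub hf hlin hφ1) (integrable_mul_comp_sub hf hquad hφ),
    integral_mul_comp_sub hf hlin hφ1, integral_mul_comp_sub hf hquad hφ,
    integral_gaussianPDFReal_mul_self v, integral_gaussianPDFReal_eq_one 0 hv,
    mul_zero, zero_add, mul_one, integral_div]

theorem stmt_15_general {ι ι' : Type*} (hv : v ≠ 0) (hw : IsProbDensity ν w)
    {s : Finset ι} {t : Finset ι'} (hs : s.Nonempty) {f : ι → X → ℝ} {g : ι' → X → ℝ}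
    (hf : ∀ i ∈ s, Measurable (f i)) (hg : ∀ j ∈ t, Measurable (g j)) {ε : ℝ}
    (hcover : ∀ i ∈ s, ∃ j ∈ t, Integrable (fun x => (f i x - g j x) ^ 2 * w x) ν ∧
      ∫ x, (f i x - g j x) ^ 2 * w x ∂ν ≤ ε ^ 2) (N : ℕ) :
    uniformMutualInfo (Measure.pi fun _ : Fin N => ν.prod volume) s
        (fun i => iidDensity N (regressionDensity w v (f i))) ≤
      Real.log t.card + N * (ε ^ 2 / (2 * v)) := by
  have hfdens i (hi : i ∈ s) := hw.regressionDensity hv (hf i hi)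
  have hgdens j (hj : j ∈ t) := hw.regressionDensity hv (hg j hj)
  refine uniformMutualInfo_le_log_card_add hs (fun i hi => (hfdens i hi).iidDensity N)
    (fun j hj => (hgdens j hj).iidDensity N) fun i hi => ?_
  obtain ⟨j, hj, hint, hle⟩ := hcover i hi
  have hfin := FiniteRelEntropy.regressionDensity hv hw (hf i hi) (hg j hj) hint
  refine ⟨j, hj, hfin.iidDensity (hfdens i hi) N, ?_⟩
  rw [relEntropy_iidDensity (hfdens i hi) hfin,
    relEntropy_regressionDensity hv hw (hf i hi) (hg j hj) hint]
  gcongr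

end GaussianRegression

/-- Mutual information bound for the Gaussian denoise problem: if `ℳ` is a finite
(packing) set of hypotheses and `𝒩` a finite ε-covering of it in `L²(μ)`, and samples are
`y = f(x) + ε` with `N(0, 1/2)` noise (so that `KL(P_f^{⊗N}‖P_{f'}^{⊗N}) = N‖f−f'‖²`),
then the mutual information between a uniform `f ∈ ℳ` and the `N`-sample satisfies
`I(θ;S) ≤ log|𝒩| + Nε²`. -/
theorem stmt_15 {Xsp : Type*} [MeasurableSpace Xsp] (ν : Measure Xsp) [SigmaFinite ν]
    (μdens : Xsp → ℝ) (hμm : Measurable μdens) (hμ0 : ∀ x, 0 ≤ μdens x)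
    (hμ1 : ∫ x, μdens x ∂ν = 1)
    (ℳ 𝒩 : Finset (Xsp → ℝ)) (hℳ : ℳ.Nonempty) (h𝒩 : 𝒩.Nonempty)
    (C : ℝ)
    (hmeas : ∀ f, f ∈ ℳ ∨ f ∈ 𝒩 → Measurable f) (hbdd : ∀ f, f ∈ ℳ ∨ f ∈ 𝒩 → ∀ x, |f x| ≤ C)
    (ε : ℝ) (hε : 0 ≤ ε)
    (hcover : ∀ f ∈ ℳ, ∃ f' ∈ 𝒩, ∫ x, (f x - f' x) ^ 2 * μdens x ∂ν ≤ ε ^ 2)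
    (N : ℕ) (hN : 0 < N)
    (pN : (Xsp → ℝ) → (Fin N → Xsp × ℝ) → ℝ)
    (hpN : ∀ f s, pN f s
      = ∏ i, (1 / Real.sqrt Real.pi) * Real.exp (-((s i).2 - f (s i).1) ^ 2) * μdens (s i).1) :
    (1 / (ℳ.card : ℝ)) * ∑ f ∈ ℳ, ∫ s,
        pN f s * Real.log (pN f s / ((1 / (ℳ.card : ℝ)) * ∑ g ∈ ℳ, pN g s))
          ∂(Measure.pi fun _ : Fin N => ν.prod (volume : Measure ℝ))
      ≤ Real.log 𝒩.card + N * ε ^ 2 := by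
  obtain rfl : pN = fun f => iidDensity N (regressionDensity μdens (1 / 2) f) :=
    funext₂ fun f s => (hpN f s).trans <| by simp only [iidDensity, regressionDensity_half]
  have hdens : IsProbDensity ν μdens := ⟨hμ0, hμ1⟩
  have hint : ∀ f ∈ ℳ, ∀ f' ∈ 𝒩, Integrable (fun x => (f x - f' x) ^ 2 * μdens x) ν :=
    fun f hf f' hf' => integrable_sub_sq_mul_of_abs_le hdens.integrable (hmeas f (.inl hf))
      (hmeas f' (.inr hf')) (hbdd f (.inl hf)) (hbdd f' (.inr hf'))
  have hbound := stmt_15_general (v := 1 / 2) (f := fun f => f) (g := fun f' => f') (by norm_num)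
    hdens hℳ (fun f hf => hmeas f (.inl hf)) (fun f' hf' => hmeas f' (.inr hf'))
    (fun f hf => let ⟨f', hf', hle⟩ := hcover f hf; ⟨f', hf', hint f hf f' hf', hle⟩) N
  simpa [uniformMutualInfo, relEntropy, uniformMixture] using hbound
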